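/- For every integer n ≥ 1, ∑_{π ∈ S_n} (-1)^{inv(π)} ∏_{j ∈ EXCi(π)} x_j = ∏_{j=1}^{n-1} (1 - x_j), as an identity of polynomials in the commuting variables x_1,…,x_{n-1}. -/

import Mathlib

open Finset MvPolynomial

/-- Number of inversions of a permutation of `Fin n`
(pairs `p.1 < p.2` with `π p.1 > π p.2`). -/
def inversions {n : ℕ} (π : Equiv.Perm (Fin n)) : ℕ :=
  (Finset.univ.filter fun p : Fin n × Fin n => p.1 < p.2 ∧ π p.2 < π p.1).card

/-- Excedance indices of a permutation. -/
def EXCi {n : ℕ} (π : Equiv.Perm (Fin n)) : Finset (Fin n) :=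
  Finset.univ.filter fun i => i < π i

/-- Excedance values of a permutation. -/
def EXCv {n : ℕ} (π : Equiv.Perm (Fin n)) : Finset (Fin n) :=
  (EXCi π).image π

/-- Right-to-left minima indices of a permutation. -/
def RLMi {n : ℕ} (π : Equiv.Perm (Fin n)) : Finset (Fin n) :=
  Finset.univ.filter fun i => ∀ j, i < j → π i < π j

/-- Right-to-left minima values of a permutation. -/
def RLMv {n : ℕ} (π : Equiv.Perm (Fin n)) : Finset (Fin n) :=
  (RLMi π).image π

/-- The derangements of `Fin n`, i.e. permutations with no fixed point. -/
def derangementsF (n : ℕ) : Finset (Equiv.Perm (Fin n)) :=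
  Finset.univ.filter fun π => ∀ i, π i ≠ i

/-!
The signed sum is the Leibniz expansion of the determinant of the matrix whose row `i` is `x i`
strictly above the diagonal and `1` elsewhere. The last row consists of ones, so subtracting `x i`
times the last row from every other row `i` leaves a lower triangular matrix with diagonal entries
`1 - x i`, except for the last one, which is `1`.
-/

theorem sign_eq_neg_one_pow_inversions {n : ℕ} (π : Equiv.Perm (Fin n)) :
    Equiv.Perm.sign π = (-1) ^ inversions π := by
  calc
    Equiv.Perm.sign π = ∏ i, ∏ j ∈ Ioi i, if π i < π j then 1 else -1 :=
      Equiv.Perm.sign_eq_prod_prod_Ioi π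
    _ = ∏ p : Fin n × Fin n with p.1 < p.2, if π p.1 < π p.2 then 1 else -1 :=
      (prod_finset_product' _ _ _ fun p ↦ by simp).symm
    _ = ∏ p : Fin n × Fin n with p.1 < p.2, if π p.2 < π p.1 then -1 else 1 := by
      refine prod_congr rfl fun p hp ↦ ?_
      have hne : π p.1 ≠ π p.2 := π.injective.ne (mem_filter.mp hp).2.ne
      rcases hne.lt_or_gt with h | h <;> simp [h, h.not_gt]
    _ = (-1) ^ inversions π := by
      rw [← prod_filter, filter_filter, prod_const, inversions]

section ExcedanceMatrix

variable {m R : Type*} [LinearOrder m] [CommRing R]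

/-- The matrix whose Leibniz expansion is the signed generating function of excedance indices:
the factor `excedanceMatrix x i (π i)` is the weight `x i` if `i` is an excedance index of `π`,
and `1` otherwise. -/
def excedanceMatrix (x : m → R) : Matrix m m R :=
  Matrix.of fun i j ↦ if i < j then x i else 1

theorem det_excedanceMatrix [Fintype m] [OrderTop m] (x : m → R) :
    (excedanceMatrix x).det = ∏ i with i ≠ ⊤, (1 - x i) := by
  let c : m → R := fun i ↦ if i = ⊤ then 0 else x i
  let L : Matrix m m R := Matrix.of fun i j ↦ if i < j then 0 else 1 - c i
  have row_reduction : ∀ i j, excedanceMatrix x i j = L i j + c i * L ⊤ j := by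
    intro i j
    by_cases hij : i < j
    · simp [excedanceMatrix, L, c, hij, hij.ne_top]
    · simp [excedanceMatrix, L, c, hij]
  have lower_triangular : L.IsLowerTriangular := fun i j hij ↦
    if_pos (OrderDual.toDual_lt_toDual.mp hij)
  calc
    (excedanceMatrix x).det = L.det :=
      Matrix.det_eq_of_forall_row_eq_smul_add_const c ⊤ (if_pos rfl) row_reduction
    _ = ∏ i, (1 - c i) := by
      simp [Matrix.det_of_isLowerTriangular L lower_triangular, L]
    _ = ∏ i with i ≠ ⊤, (1 - x i) := by
      rw [prod_filter]
      refine prod_congr rfl fun i _ ↦ ?_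
      by_cases hi : i = ⊤ <;> simp [c, hi]

theorem det_excedanceMatrix_eq_sum {n : ℕ} (x : Fin n → R) :
    (excedanceMatrix x).det =
      ∑ π : Equiv.Perm (Fin n), (-1) ^ inversions π * ∏ j ∈ EXCi π, x j := by
  rw [← Matrix.det_transpose, Matrix.det_apply']
  refine sum_congr rfl fun π _ ↦ ?_
  simp [sign_eq_neg_one_pow_inversions, excedanceMatrix, EXCi, prod_filter]

end ExcedanceMatrix

theorem stmt7_general {R : Type*} [CommRing R] (n : ℕ) (x : Fin n → R) :
    ∑ π : Equiv.Perm (Fin n), (-1) ^ inversions π * ∏ j ∈ EXCi π, x j =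
      ∏ j : Fin n with j.val < n - 1, (1 - x j) := by
  rw [← det_excedanceMatrix_eq_sum]
  cases n with
  | zero => simp
  | succ n =>
    have ne_top_iff (j : Fin (n + 1)) : j ≠ ⊤ ↔ j.val < n + 1 - 1 := by
      rw [← lt_top_iff_ne_top, Fin.lt_def, Fin.top_eq_last, Fin.val_last, Nat.add_sub_cancel]
    simp only [det_excedanceMatrix, ne_top_iff]

/-- Here `Fin n` represents `[n]` via `i ↦ i + 1`; the right-hand side is
the product of `1 - x_j` over `j = 1, …, n - 1`, i.e. over indices
`j : Fin n` with `(j : ℕ) < n - 1`. -/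
theorem stmt7 (n : ℕ) (hn : 1 ≤ n) :
    ∑ π : Equiv.Perm (Fin n),
      ((-1 : MvPolynomial (Fin n) ℤ) ^ inversions π) * ∏ j ∈ EXCi π, X j
    = ∏ j ∈ Finset.univ.filter (fun j : Fin n => (j : ℕ) < n - 1),
        (1 - (X j : MvPolynomial (Fin n) ℤ)) :=
  stmt7_general n X
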